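/- A two-colouring of the vertex set {o_1,q_1,p_1,r_1,o_2,q_2,p_2,r_2,o_3,q_3,p_3,r_3,a} extends to an almost two-coloured perfect matching of the clause gadget K if and only if both of the following hold: (1) for each t = 1, 2, 3, the vertices o_t, p_t, q_t, r_t all receive the same colour; (2) for exactly two values of t ∈ {1,2,3}, the vertices o_t, p_t, q_t, r_t receive the same colour as a. -/

import Mathlib

/-- An almost two-coloured perfect matching of `G`: a two-colouring (black/white,
modelled by `Bool`) of the vertices in which every vertex of degree at least two
(i.e. having two distinct neighbours) has exactly one neighbour of the same colour. -/
def IsAlmostTCPM {V : Type*} (G : SimpleGraph V) (c : V → Bool) : Prop :=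
  ∀ v, (∃ w₁ w₂, w₁ ≠ w₂ ∧ G.Adj v w₁ ∧ G.Adj v w₂) →
    ∃! w, G.Adj v w ∧ c w = c v

/-- The vertices of one copy of `H` inside the clause gadget `K`: the vertices of `H`
other than `a`, `m`, `n` (which are identified or deleted in the construction of `K`). -/
inductive KHV | b | c | d | e | f | g | h | i | j | k | l | o | p | q | r
deriving DecidableEq

/-- The vertices of the clause gadget `K`: the identified vertex `a`, together with
three copies (indexed by `Fin 3`) of the vertices of `H` other than `a`, `m`, `n`. -/
inductive KV | a | v (t : Fin 3) (x : KHV)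
deriving DecidableEq

open KHV in
/-- The edges of `H` not incident to `a`, `m`, `n`, used inside each copy of `H` in `K`. -/
def KCopyEdges : List (KHV × KHV) :=
  [(b,c),(b,d),(c,e),(c,f),(e,f),(d,g),(d,h),(g,h),(e,i),(f,j),(g,k),
   (h,l),(j,k),(i,o),(j,o),(o,q),(k,p),(l,p),(p,r)]

/-- The edges of the clause gadget `K`: the edges inside the three copies of `H`,
the edges `a bₜ` for `t = 1,2,3`, and the edges `l₁i₂`, `l₂i₃`, `l₃i₁`. -/
def KEdges : List (KV × KV) :=
  ((List.finRange 3).flatMap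
    (fun t => KCopyEdges.map (fun e => (KV.v t e.1, KV.v t e.2)))) ++
  [(KV.a, KV.v 0 KHV.b), (KV.a, KV.v 1 KHV.b), (KV.a, KV.v 2 KHV.b),
   (KV.v 0 KHV.l, KV.v 1 KHV.i), (KV.v 1 KHV.l, KV.v 2 KHV.i),
   (KV.v 2 KHV.l, KV.v 0 KHV.i)]

/-- The clause gadget graph `K`. -/
def KG : SimpleGraph KV := SimpleGraph.fromRel (fun x y => (x, y) ∈ KEdges)

/-- The set of vertices `{o₁,q₁,p₁,r₁,o₂,q₂,p₂,r₂,o₃,q₃,p₃,r₃,a}` of `K`. -/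
def KBoundary : Set KV :=
  {KV.a} ∪ {x | ∃ t, x = KV.v t KHV.o ∨ x = KV.v t KHV.p ∨
    x = KV.v t KHV.q ∨ x = KV.v t KHV.r}

/-!
At a vertex of degree three, "exactly one neighbour has my colour" forces the colours of the three
neighbours to sum modulo two to the colour of the vertex. Hence the three vertices attached to a
triangle of such vertices all get the colour that is the sum over the triangle. The triangles
`c e f` and `d g h` of a copy of `H` thus give `i, j, k, l` the colour of `b`; the edge `jk` is
then monochromatic, so `o` and `p` get the other colour, and `q`, `r` must match `o`, `p`. At `a`,
exactly one `bₜ` has the colour of `a`, so exactly one `oₜ` does not. Conversely, the three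
cyclically linked copies can be coloured explicitly once that exceptional copy is chosen.
-/

theorem card_filter_eq_iff_existsUnique_not {α : Type*} [Fintype α] {n : ℕ}
    (hn : Fintype.card α = n + 1) (p : α → Prop) [DecidablePred p] :
    (Finset.univ.filter p).card = n ↔ ∃! x, ¬ p x := by
  have hcard : (Finset.univ.filter p).card + (Finset.univ.filter fun x => ¬ p x).card = n + 1 := by
    rw [Finset.card_filter_add_card_filter_not, Finset.card_univ, hn]
  rw [Fintype.existsUnique_iff_card_one]
  lia

section AlmostTCPM

variable {V : Type*} {G : SimpleGraph V} {c : V → Bool} {v x y z x' y' z' : V}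

theorem isAlmostTCPM_iff_card [G.LocallyFinite] :
    IsAlmostTCPM G c ↔
      ∀ v, 1 < G.degree v → {w ∈ G.neighborFinset v | c w = c v}.card = 1 := by
  simp only [IsAlmostTCPM, ← G.card_neighborFinset_eq_degree, Finset.one_lt_card_iff,
    Finset.card_eq_one_iff_existsUnique, Finset.mem_filter, G.mem_neighborFinset]
  exact forall_congr' fun v => by grind

/-- `v` is a vertex of degree three, with neighbours `x`, `y` and `z`. -/
structure IsCubicAt (G : SimpleGraph V) (v x y z : V) : Prop where
  neighborSet_eq : G.neighborSet v = {x, y, z}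
  nodup : [x, y, z].Nodup

theorem IsCubicAt.adj_iff (h : IsCubicAt G v x y z) {w : V} :
    G.Adj v w ↔ w = x ∨ w = y ∨ w = z :=
  Set.ext_iff.mp h.neighborSet_eq w

namespace IsAlmostTCPM

theorem eq_not_of_adj (hc : IsAlmostTCPM G c) (hx : G.Adj v x) (hy : G.Adj v y) (hxy : x ≠ y)
    (h : c x = c v) : c y = !c v :=
  Bool.eq_not.mpr fun hcy =>
    hxy ((hc v ⟨x, y, hxy, hx, hy⟩).unique ⟨hx, h⟩ ⟨hy, hcy⟩)

theorem xor_neighbors_eq (hc : IsAlmostTCPM G c) (hv : IsCubicAt G v x y z) :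
    (c x ^^ c y ^^ c z) = c v := by
  obtain ⟨⟨hxy, hxz⟩, hyz⟩ : (x ≠ y ∧ x ≠ z) ∧ y ≠ z := by simpa using hv.nodup
  have hx : G.Adj v x := hv.adj_iff.mpr (.inl rfl)
  have hy : G.Adj v y := hv.adj_iff.mpr (.inr (.inl rfl))
  have hz : G.Adj v z := hv.adj_iff.mpr (.inr (.inr rfl))
  obtain ⟨w, hw, hcw⟩ := (hc v ⟨x, y, hxy, hx, hy⟩).exists
  rcases hv.adj_iff.mp hw with rfl | rfl | rfl
  · simp [hc.eq_not_of_adj hx hy hxy hcw, hc.eq_not_of_adj hx hz hxz hcw, hcw]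
  · simp [hc.eq_not_of_adj hy hx hxy.symm hcw, hc.eq_not_of_adj hy hz hyz hcw, hcw]
  · simp [hc.eq_not_of_adj hz hx hxz.symm hcw, hc.eq_not_of_adj hz hy hyz.symm hcw, hcw]

theorem eq_of_neighbors_eq (hc : IsAlmostTCPM G c) (hv : IsCubicAt G v x y z) (h : c x = c y) :
    c z = c v := by
  simpa [h] using hc.xor_neighbors_eq hv

theorem eq_of_triangle (hc : IsAlmostTCPM G c) (hx : IsCubicAt G x y z x')
    (hy : IsCubicAt G y x z y') (hz : IsCubicAt G z x y z') :
    c y' = c x' ∧ c z' = c x' := by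
  have hx' : c x' = (c x ^^ c y ^^ c z) := by
    simp [← hc.xor_neighbors_eq hx, Bool.xor_comm, Bool.xor_left_comm]
  have hy' : c y' = (c x ^^ c y ^^ c z) := by
    simp [← hc.xor_neighbors_eq hy, Bool.xor_comm, Bool.xor_left_comm]
  have hz' : c z' = (c x ^^ c y ^^ c z) := by
    simp [← hc.xor_neighbors_eq hz, Bool.xor_comm, Bool.xor_left_comm]
  exact ⟨hy'.trans hx'.symm, hz'.trans hx'.symm⟩

end IsAlmostTCPM

end AlmostTCPM

instance : Fintype KHV where
  elems := {.b, .c, .d, .e, .f, .g, .h, .i, .j, .k, .l, .o, .p, .q, .r}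
  complete x := by cases x <;> decide

instance : Fintype KV where
  elems := insert .a (Finset.image₂ .v .univ .univ)
  complete x := by cases x <;> simp

/-- The neighbours in `KG` of each vertex; at the vertices of the triangles `c e f` and `d g h`,
the neighbour outside the triangle comes last. -/
def KV.neighbors : KV → Finset KV
  | .a => Finset.univ.image fun t => .v t .b
  | .v t .b => {.a, .v t .c, .v t .d}
  | .v t .c => {.v t .e, .v t .f, .v t .b}
  | .v t .d => {.v t .g, .v t .h, .v t .b}
  | .v t .e => {.v t .c, .v t .f, .v t .i}
  | .v t .f => {.v t .c, .v t .e, .v t .j}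
  | .v t .g => {.v t .d, .v t .h, .v t .k}
  | .v t .h => {.v t .d, .v t .g, .v t .l}
  | .v t .i => {.v t .e, .v t .o, .v (t - 1) .l}
  | .v t .j => {.v t .f, .v t .k, .v t .o}
  | .v t .k => {.v t .g, .v t .j, .v t .p}
  | .v t .l => {.v t .h, .v t .p, .v (t + 1) .i}
  | .v t .o => {.v t .i, .v t .j, .v t .q}
  | .v t .p => {.v t .k, .v t .l, .v t .r}
  | .v t .q => {.v t .o}
  | .v t .r => {.v t .p}

theorem KG_adj_iff : ∀ {x y : KV}, KG.Adj x y ↔ y ∈ x.neighbors := by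
  simp only [KG, SimpleGraph.fromRel_adj]
  decide +kernel

instance : DecidableRel KG.Adj := fun _ _ => decidable_of_iff' _ KG_adj_iff

theorem KG_neighborFinset_eq (x : KV) : KG.neighborFinset x = x.neighbors := by
  ext y
  rw [SimpleGraph.mem_neighborFinset, KG_adj_iff]

theorem isCubicAt_KG_of_neighbors_eq {v x y z : KV} (h : v.neighbors = {x, y, z})
    (hnodup : [x, y, z].Nodup) : IsCubicAt KG v x y z where
  neighborSet_eq := by simp [← SimpleGraph.coe_neighborFinset, KG_neighborFinset_eq, h]
  nodup := hnodup

/-- The vertices of a copy of `H` that are forced to have the colour of `b`. -/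
def KHV.hubs : Finset KHV := {.b, .i, .j, .k, .l}

/-- The vertices of a copy of `H` that lie in `KBoundary`. -/
def KHV.terminals : Finset KHV := {.o, .p, .q, .r}

theorem forall_mem_KBoundary {P : KV → Prop} :
    (∀ x ∈ KBoundary, P x) ↔ P .a ∧ ∀ t, ∀ x ∈ KHV.terminals, P (.v t x) := by
  simp only [KBoundary, KHV.terminals]
  aesop

/-- The terminals of each copy have the colour of `a`, except in copy `s`, where they have the
other colour. -/
def IsExceptionalCopy (c : KV → Bool) (s : Fin 3) : Prop :=
  ∀ t, ∀ x ∈ KHV.terminals, c (.v t x) = if t = s then !c .a else c .a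

section Necessity

variable {c : KV → Bool}

theorem IsAlmostTCPM.hub_eq_b (hc : IsAlmostTCPM KG c) (t : Fin 3) :
    ∀ x ∈ KHV.hubs, c (.v t x) = c (.v t .b) := by
  have cubic_c : IsCubicAt KG (.v t .c) (.v t .e) (.v t .f) (.v t .b) :=
    isCubicAt_KG_of_neighbors_eq rfl (by simp)
  have cubic_e : IsCubicAt KG (.v t .e) (.v t .c) (.v t .f) (.v t .i) :=
    isCubicAt_KG_of_neighbors_eq rfl (by simp)
  have cubic_f : IsCubicAt KG (.v t .f) (.v t .c) (.v t .e) (.v t .j) :=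
    isCubicAt_KG_of_neighbors_eq rfl (by simp)
  have cubic_d : IsCubicAt KG (.v t .d) (.v t .g) (.v t .h) (.v t .b) :=
    isCubicAt_KG_of_neighbors_eq rfl (by simp)
  have cubic_g : IsCubicAt KG (.v t .g) (.v t .d) (.v t .h) (.v t .k) :=
    isCubicAt_KG_of_neighbors_eq rfl (by simp)
  have cubic_h : IsCubicAt KG (.v t .h) (.v t .d) (.v t .g) (.v t .l) :=
    isCubicAt_KG_of_neighbors_eq rfl (by simp)
  obtain ⟨hi, hj⟩ := hc.eq_of_triangle cubic_c cubic_e cubic_f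
  obtain ⟨hk, hl⟩ := hc.eq_of_triangle cubic_d cubic_g cubic_h
  simp [KHV.hubs, hi, hj, hk, hl]

theorem IsAlmostTCPM.terminal_eq_not_b (hc : IsAlmostTCPM KG c) (t : Fin 3) :
    ∀ x ∈ KHV.terminals, c (.v t x) = !c (.v t .b) := by
  have hi := hc.hub_eq_b t .i (by decide)
  have hj := hc.hub_eq_b t .j (by decide)
  have hk := hc.hub_eq_b t .k (by decide)
  have hl := hc.hub_eq_b t .l (by decide)
  have adj_jk : KG.Adj (.v t .j) (.v t .k) := by simp [KG_adj_iff, KV.neighbors]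
  have adj_jo : KG.Adj (.v t .j) (.v t .o) := by simp [KG_adj_iff, KV.neighbors]
  have adj_kp : KG.Adj (.v t .k) (.v t .p) := by simp [KG_adj_iff, KV.neighbors]
  have cubic_o : IsCubicAt KG (.v t .o) (.v t .i) (.v t .j) (.v t .q) :=
    isCubicAt_KG_of_neighbors_eq rfl (by simp)
  have cubic_p : IsCubicAt KG (.v t .p) (.v t .k) (.v t .l) (.v t .r) :=
    isCubicAt_KG_of_neighbors_eq rfl (by simp)
  have ho : c (.v t .o) = !c (.v t .j) :=
    hc.eq_not_of_adj adj_jk adj_jo (by simp) (hk.trans hj.symm)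
  have hp : c (.v t .p) = !c (.v t .k) :=
    hc.eq_not_of_adj adj_jk.symm adj_kp (by simp) (hj.trans hk.symm)
  have hq : c (.v t .q) = c (.v t .o) := hc.eq_of_neighbors_eq cubic_o (hi.trans hj.symm)
  have hr : c (.v t .r) = c (.v t .p) := hc.eq_of_neighbors_eq cubic_p (hk.trans hl.symm)
  simp [KHV.terminals, ho, hp, hq, hr, hj, hk]

theorem IsAlmostTCPM.existsUnique_b_eq_a (hc : IsAlmostTCPM KG c) :
    ∃! t, c (.v t .b) = c .a := by
  have adj_b (t : Fin 3) : KG.Adj .a (.v t .b) := by simp [KG_adj_iff, KV.neighbors]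
  obtain ⟨w, ⟨hw, hcw⟩, huniq⟩ := hc .a ⟨.v 0 .b, .v 1 .b, by simp, adj_b 0, adj_b 1⟩
  obtain ⟨s, rfl⟩ : ∃ s, .v s .b = w := by simpa [KG_adj_iff, KV.neighbors] using hw
  exact ⟨s, hcw, fun t ht => by simpa using huniq _ ⟨adj_b t, ht⟩⟩

theorem IsAlmostTCPM.exists_isExceptionalCopy (hc : IsAlmostTCPM KG c) :
    ∃ s, IsExceptionalCopy c s := by
  obtain ⟨s, hs, huniq⟩ := hc.existsUnique_b_eq_a
  refine ⟨s, fun t x hx => ?_⟩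
  rw [hc.terminal_eq_not_b t x hx]
  split_ifs with hts
  · rw [hts, hs]
  · rw [Bool.eq_not.mpr (mt (huniq t) hts), Bool.not_not]

end Necessity

/-- The vertices coloured like `b` in the copy that is `u` steps after the exceptional one.

The edge `jk` forces `f` and `g` to differ from `b`, so each triangle has exactly one vertex
coloured like `b`, among `c, e` and among `d, h`. The conditions at `b` and at the linked vertices
`i`, `l` leave only the choice below. -/
def hubClass (u : Fin 3) : Finset KHV :=
  KHV.hubs ∪ ![{.e, .h}, {.d, .e}, {.c, .h}] u

/-- The colouring of the gadget in which `a` has colour `α` and `s` is the exceptional copy. -/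
def gadgetColouring (s : Fin 3) (α : Bool) : KV → Bool
  | .a => α
  | .v t x => if x ∈ hubClass (t - s) ↔ t = s then α else !α

theorem isAlmostTCPM_gadgetColouring (s : Fin 3) (α : Bool) :
    IsAlmostTCPM KG (gadgetColouring s α) := by
  simp only [isAlmostTCPM_iff_card, ← SimpleGraph.card_neighborFinset_eq_degree,
    KG_neighborFinset_eq]
  decide +kernel +revert

theorem isExceptionalCopy_gadgetColouring (s : Fin 3) (α : Bool) :
    IsExceptionalCopy (gadgetColouring s α) s := by
  unfold IsExceptionalCopy
  decide +kernel +revert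

theorem exists_isExceptionalCopy_iff {c : KV → Bool} :
    (∃ s, IsExceptionalCopy c s) ↔
      (∀ t : Fin 3, c (.v t .o) = c (.v t .p) ∧ c (.v t .o) = c (.v t .q) ∧
        c (.v t .o) = c (.v t .r)) ∧
      (Finset.univ.filter fun t : Fin 3 => c (.v t .o) = c .a).card = 2 := by
  rw [card_filter_eq_iff_existsUnique_not (Fintype.card_fin 3)]
  simp only [IsExceptionalCopy, KHV.terminals, Finset.forall_mem_insert, Finset.mem_singleton,
    forall_eq]
  constructor
  · rintro ⟨s, hs⟩
    exact ⟨by grind, s, by grind, by grind⟩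
  · rintro ⟨hconst, s, hs, huniq⟩
    have ho (t : Fin 3) : c (.v t .o) = if t = s then !c .a else c .a := by
      split_ifs with hts
      · exact hts ▸ Bool.eq_not.mpr hs
      · exact not_not.mp (mt (huniq t) hts)
    exact ⟨s, by grind⟩

/-- A two-colouring of `{o₁,q₁,p₁,r₁,o₂,q₂,p₂,r₂,o₃,q₃,p₃,r₃,a}` extends to an almost
two-coloured perfect matching of the clause gadget `K` if and only if (1) for each `t`,
the vertices `oₜ, pₜ, qₜ, rₜ` all get the same colour, and (2) for exactly two values
of `t`, the vertices `oₜ, pₜ, qₜ, rₜ` get the same colour as `a`. -/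
theorem stmt_4 (c₀ : KV → Bool) :
    (∃ c : KV → Bool, IsAlmostTCPM KG c ∧ ∀ x ∈ KBoundary, c x = c₀ x) ↔
    ((∀ t : Fin 3, c₀ (KV.v t KHV.o) = c₀ (KV.v t KHV.p) ∧
        c₀ (KV.v t KHV.o) = c₀ (KV.v t KHV.q) ∧
        c₀ (KV.v t KHV.o) = c₀ (KV.v t KHV.r)) ∧
      (Finset.univ.filter (fun t : Fin 3 => c₀ (KV.v t KHV.o) = c₀ KV.a)).card = 2) := by
  rw [← exists_isExceptionalCopy_iff]
  constructor
  · rintro ⟨c, hc, hext⟩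
    obtain ⟨ha, hterminal⟩ := forall_mem_KBoundary.mp hext
    obtain ⟨s, hs⟩ := hc.exists_isExceptionalCopy
    exact ⟨s, fun t x hx => by rw [← hterminal t x hx, ← ha, hs t x hx]⟩
  · rintro ⟨s, hs⟩
    refine ⟨gadgetColouring s (c₀ .a), isAlmostTCPM_gadgetColouring s _, ?_⟩
    exact forall_mem_KBoundary.mpr ⟨rfl, fun t x hx =>
      (isExceptionalCopy_gadgetColouring s _ t x hx).trans (hs t x hx).symm⟩
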